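/- Let H be a complex Hilbert space with dim H ≥ 3 and let A ∈ B_s(H) be nonscalar with A^# = A^c. The following are equivalent: (1) the spectrum of A consists of exactly two points whose sum is nonzero; (2) every B ∈ B_s(H) with B^# = B^c and B^{##} ⊊ A^{##} is scalar. -/

import Mathlib

noncomputable section

variable {H : Type*} [NormedAddCommGroup H] [InnerProductSpace ℂ H] [CompleteSpace H]

/-- `M^c`: the set of self-adjoint operators commuting with every member of `M`. -/
def CSet (M : Set (selfAdjoint (H →L[ℂ] H))) : Set (selfAdjoint (H →L[ℂ] H)) :=
  {X | ∀ T ∈ M, (X : H →L[ℂ] H) * (T : H →L[ℂ] H) = (T : H →L[ℂ] H) * (X : H →L[ℂ] H)}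

/-- `M^#`: the set of self-adjoint operators quasi-commuting with every member of `M`. -/
def QSet (M : Set (selfAdjoint (H →L[ℂ] H))) : Set (selfAdjoint (H →L[ℂ] H)) :=
  {X | ∀ T ∈ M,
    (X : H →L[ℂ] H) * (T : H →L[ℂ] H) = (T : H →L[ℂ] H) * (X : H →L[ℂ] H) ∨
    (X : H →L[ℂ] H) * (T : H →L[ℂ] H) + (T : H →L[ℂ] H) * (X : H →L[ℂ] H) = 0}

/-
When `B^# = B^c`, also `B^{##} = B^{cc}`, so the second condition concerns proper inclusions of
bicommutants: `B^{cc} ⊊ A^{cc}` means that `B ∈ A^{cc}` but `A ∉ B^{cc}`.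

An element of `A^{cc}` acts as a scalar on each eigenspace of `A`, because it commutes with the
rank-one operators between eigenvectors. If `A` has exactly two spectral points, its eigenspaces
span `H`, so every `B ∈ A^{cc}` has the form `s • A + t • 1`; when `s ≠ 0` this gives back
`A ∈ B^{cc}`, hence a proper inclusion forces `B` to be scalar.

If `A` has three spectral points `p`, `q`, `r`, let `k ≥ 0` be a continuous bump equal to zero near
`p` and `q` but not at `r`. Then `k(A)` is nonscalar and, being positive, satisfies
`k(A)^# = k(A)^c`. Were `A` in `k(A)^{cc}`, it would act as a scalar on `ker k(A)`, contradicting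
`p ≠ q`. So minimality leaves two spectral points, and these are not `a` and `-a`: the operator
swapping eigenvectors for `a` and `-a` and killing their orthogonal complement would lie in `A^#`
but not in `A^c`.
-/

section CStarAlgebra

variable {𝒜 : Type*} [CStarAlgebra 𝒜]

lemma exists_eq_smul_one_iff_spectrum_subsingleton {a : 𝒜} (ha : IsSelfAdjoint a) :
    (∃ r : ℝ, a = (r : ℂ) • 1) ↔ (spectrum ℝ a).Subsingleton := by
  have hcoe : ∀ r : ℝ, (r : ℂ) • (1 : 𝒜) = algebraMap ℝ 𝒜 r := fun r => by
    rw [Complex.coe_smul, Algebra.algebraMap_eq_smul_one]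
  simp only [hcoe]
  refine ⟨?_, fun h => ?_⟩
  · rintro ⟨r, rfl⟩
    exact Set.subsingleton_of_subset_singleton (CFC.spectrum_algebraMap_subset r)
  · obtain ⟨r, hr⟩ : ∃ r, spectrum ℝ a ⊆ {r} := by
      rcases h.eq_empty_or_singleton with h | ⟨r, h⟩
      · exact ⟨0, h ▸ Set.empty_subset _⟩
      · exact ⟨r, h.subset⟩
    exact ⟨r, CFC.eq_algebraMap_of_spectrum_subset_singleton a r hr⟩

lemma spectrum_complex_eq_pair_iff {a : 𝒜} (ha : IsSelfAdjoint a) {z w : ℂ} :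
    spectrum ℂ a = {z, w} ↔ ∃ x y : ℝ, z = x ∧ w = y ∧ spectrum ℝ a = {x, y} := by
  constructor
  · intro h
    have hz : z = z.re := ha.mem_spectrum_eq_re (by simp [h])
    have hw : w = w.re := ha.mem_spectrum_eq_re (by simp [h])
    refine ⟨z.re, w.re, hz, hw, Set.ext fun t => ?_⟩
    rw [← ha.coe_mem_spectrum_complex, h, hz, hw]
    simp
  · rintro ⟨x, y, rfl, rfl, h⟩
    rw [← ha.spectrumRestricts.algebraMap_image, h, Set.image_pair, Complex.coe_algebraMap]

open Polynomial in
lemma sub_smul_one_mul_sub_smul_one_eq_zero {a : 𝒜} (ha : IsSelfAdjoint a) {x y : ℝ}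
    (h : spectrum ℝ a ⊆ {x, y}) : (a - (x : ℂ) • 1) * (a - (y : ℂ) • 1) = 0 := by
  have hzero : aeval a ((X - C x) * (X - C y)) = 0 := by
    rw [← cfc_polynomial _ a, ← cfc_const_zero ℝ a]
    refine cfc_congr fun t ht => ?_
    rcases h ht with rfl | rfl <;> simp
  simpa [Algebra.algebraMap_eq_smul_one] using hzero

lemma commute_of_nonneg_of_mul_add_mul_eq_zero [PartialOrder 𝒜] [StarOrderedRing 𝒜] {b x : 𝒜}
    (hb : 0 ≤ b) (h : x * b + b * x = 0) : Commute x b := by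
  have hsq : Commute (b * b) x := by
    rw [commute_iff_eq]
    linear_combination (norm := noncomm_ring) b * h - h * b
  have hsqrt : Commute (CFC.sqrt (b * b)) x := hsq.cfcₙ_nnreal NNReal.sqrt
  rw [CFC.sqrt_mul_self b] at hsqrt
  exact hsqrt.symm

end CStarAlgebra

section Commutant

variable {M N : Set (selfAdjoint (H →L[ℂ] H))} {A B X : selfAdjoint (H →L[ℂ] H)}

lemma mem_CSet_singleton : X ∈ CSet {A} ↔ Commute (X : H →L[ℂ] H) A := by
  simp only [CSet, Set.mem_ofPred_eq, Set.mem_singleton_iff, forall_eq, commute_iff_eq]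

lemma CSet_subset_QSet (M : Set (selfAdjoint (H →L[ℂ] H))) : CSet M ⊆ QSet M :=
  fun _ hX T hT => Or.inl (hX T hT)

lemma CSet_CSet_subset_iff : CSet (CSet M) ⊆ CSet (CSet N) ↔ M ⊆ CSet (CSet N) :=
  ⟨fun h _ hB => h fun _ hX => (hX _ hB).symm,
    fun h _ hY X hX => hY X fun _ hT => (h hT X hX).symm⟩

lemma CSet_CSet_singleton_ssubset_iff :
    CSet (CSet {B}) ⊂ CSet (CSet {A}) ↔ B ∈ CSet (CSet {A}) ∧ A ∉ CSet (CSet {B}) := by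
  simp only [ssubset_iff_subset_not_subset, CSet_CSet_subset_iff, Set.singleton_subset_iff]

open ComplexStarModule in
lemma commute_of_mem_CSet_CSet (hB : B ∈ CSet (CSet M)) {T : H →L[ℂ] H}
    (hT : ∀ A ∈ M, Commute T A) : Commute (B : H →L[ℂ] H) T := by
  have hstar : ∀ A ∈ M, Commute (star T) (A : H →L[ℂ] H) := fun A hA => by
    simpa only [A.2.star_eq] using (hT A hA).star_star
  have hre : ℜ T ∈ CSet M := fun A hA => by
    rw [realPart_apply_coe]
    exact ((hT A hA).add_left (hstar A hA)).smul_left _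
  have him : ℑ T ∈ CSet M := fun A hA => by
    rw [imaginaryPart_apply_coe]
    exact (((hT A hA).sub_left (hstar A hA)).smul_left _).smul_left _
  rw [← realPart_add_I_smul_imaginaryPart T]
  exact Commute.add_right (hB _ hre) (Commute.smul_right (hB _ him) _)

-- An operator anticommuting with both `X` and `X + 1` is zero.
lemma QSet_CSet (M : Set (selfAdjoint (H →L[ℂ] H))) : QSet (CSet M) = CSet (CSet M) := by
  refine Set.Subset.antisymm (fun Y hY X hX => ?_) (CSet_subset_QSet _)
  have hX1 : X + 1 ∈ CSet M := fun T hT => Commute.add_left (hX T hT) (Commute.one_left _)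
  rcases hY X hX with hcomm | hanti
  · exact hcomm
  rcases hY (X + 1) hX1 with hcomm | hanti1
  · simpa [mul_add, add_mul] using hcomm
  · have htwo : (2 : ℂ) • (Y : H →L[ℂ] H) = 0 := by
      simp only [AddSubgroup.coe_add, selfAdjoint.val_one, mul_add, add_mul, mul_one,
        one_mul] at hanti1
      linear_combination (norm := module) hanti1 - hanti
    have hY0 : (Y : H →L[ℂ] H) = 0 := (smul_eq_zero.1 htwo).resolve_left two_ne_zero
    rw [hY0, zero_mul, mul_zero]

lemma QSet_QSet_eq_CSet_CSet (h : QSet M = CSet M) : QSet (QSet M) = CSet (CSet M) := by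
  rw [h, QSet_CSet]

lemma QSet_QSet_singleton_ssubset_iff (hA : QSet {A} = CSet {A}) (hB : QSet {B} = CSet {B}) :
    QSet (QSet {B}) ⊂ QSet (QSet {A}) ↔ B ∈ CSet (CSet {A}) ∧ A ∉ CSet (CSet {B}) := by
  rw [QSet_QSet_eq_CSet_CSet hA, QSet_QSet_eq_CSet_CSet hB, CSet_CSet_singleton_ssubset_iff]

lemma QSet_eq_CSet_of_nonneg (hB : 0 ≤ (B : H →L[ℂ] H)) : QSet {B} = CSet {B} := by
  refine Set.Subset.antisymm (fun X hX => ?_) (CSet_subset_QSet _)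
  rw [mem_CSet_singleton]
  exact (hX B rfl).elim id (commute_of_nonneg_of_mul_add_mul_eq_zero hB)

end Commutant

section Eigenspace

open InnerProductSpace Module.End

variable {A B : selfAdjoint (H →L[ℂ] H)} {a b : ℝ} {u v : H}

omit [CompleteSpace H] in
lemma mul_rankOne_of_mem_eigenspace {T : H →L[ℂ] H} {c : ℂ}
    (hu : u ∈ eigenspace (T : H →ₗ[ℂ] H) c) (v : H) : T * rankOne ℂ u v = c • rankOne ℂ u v := by
  have hTu : T u = c • u := mem_eigenspace_iff.1 hu
  rw [ContinuousLinearMap.mul_def, comp_rankOne, hTu, map_smul, smul_apply]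

lemma rankOne_mul_of_mem_eigenspace {T : H →L[ℂ] H} (hT : IsSelfAdjoint T)
    (hv : v ∈ eigenspace (T : H →ₗ[ℂ] H) (b : ℂ)) (u : H) :
    rankOne ℂ u v * T = (b : ℂ) • rankOne ℂ u v := by
  have hTv : T v = (b : ℂ) • v := mem_eigenspace_iff.1 hv
  rw [ContinuousLinearMap.mul_def, rankOne_comp, hT.adjoint_eq, hTv, map_smulₛₗ,
    Complex.conj_ofReal]

lemma exists_eigenspace_le_of_mem_CSet_CSet (hB : B ∈ CSet (CSet {A})) (a : ℝ) :
    ∃ c : ℝ, eigenspace ((A : H →L[ℂ] H) : H →ₗ[ℂ] H) (a : ℂ) ≤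
      eigenspace ((B : H →L[ℂ] H) : H →ₗ[ℂ] H) (c : ℂ) := by
  rcases eq_or_ne (eigenspace ((A : H →L[ℂ] H) : H →ₗ[ℂ] H) (a : ℂ)) ⊥ with h | h
  · exact ⟨0, h ▸ bot_le⟩
  obtain ⟨w, hw, hw0⟩ := Submodule.exists_mem_ne_zero_of_ne_bot h
  refine ⟨(B : H →L[ℂ] H).rayleighQuotient w, fun u hu => mem_eigenspace_iff.2 ?_⟩
  have hcomm : Commute (B : H →L[ℂ] H) (rankOne ℂ u w) := by
    refine commute_of_mem_CSet_CSet hB ?_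
    simp only [Set.mem_singleton_iff, forall_eq, commute_iff_eq]
    rw [rankOne_mul_of_mem_eigenspace A.2 hw, mul_rankOne_of_mem_eigenspace hu]
  have happly : inner ℂ w w • (B : H →L[ℂ] H) u = inner ℂ w ((B : H →L[ℂ] H) w) • u := by
    simpa using congr($(hcomm.eq) w)
  have hrayleigh : inner ℂ w ((B : H →L[ℂ] H) w) =
      inner ℂ w w * ((B : H →L[ℂ] H).rayleighQuotient w : ℂ) := by
    rw [Complex.ofReal_div, Complex.ofReal_pow, inner_self_eq_norm_sq_to_K,
      ← Complex.coe_algebraMap, mul_div_cancel₀ _ (by simpa using hw0)]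
    exact ((B.2.isSymmetric.coe_reApplyInnerSelf_apply w).trans (B.2.isSymmetric w w)).symm
  rw [hrayleigh, mul_smul] at happly
  exact smul_right_injective H (inner_self_ne_zero.2 hw0) happly

lemma map_sub_smul_mem_eigenspace {T : H →L[ℂ] H} (hT : IsSelfAdjoint T)
    (h : spectrum ℝ T ⊆ {a, b}) (x : H) :
    T x - (b : ℂ) • x ∈ eigenspace (T : H →ₗ[ℂ] H) (a : ℂ) := by
  have hx := congr($(sub_smul_one_mul_sub_smul_one_eq_zero hT h) x)
  rw [mem_eigenspace_iff]
  exact sub_eq_zero.1 hx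

lemma hasEigenvalue_of_spectrum_subset_pair {T : H →L[ℂ] H} (hT : IsSelfAdjoint T)
    (h : spectrum ℝ T ⊆ {a, b}) (hb : T ≠ (b : ℂ) • 1) :
    HasEigenvalue (T : H →ₗ[ℂ] H) (a : ℂ) := by
  obtain ⟨x, hx⟩ := DFunLike.ne_iff.1 hb
  exact hasEigenvalue_of_hasEigenvector
    ⟨map_sub_smul_mem_eigenspace hT h x, sub_ne_zero.2 hx⟩

lemma exists_eq_smul_add_smul_one_of_mem_CSet_CSet (hab : a ≠ b)
    (h : spectrum ℝ (A : H →L[ℂ] H) ⊆ {a, b}) (hB : B ∈ CSet (CSet {A})) :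
    ∃ s t : ℝ, (B : H →L[ℂ] H) = (s : ℂ) • (A : H →L[ℂ] H) + (t : ℂ) • 1 := by
  obtain ⟨c, hc⟩ := exists_eigenspace_le_of_mem_CSet_CSet hB a
  obtain ⟨d, hd⟩ := exists_eigenspace_le_of_mem_CSet_CSet hB b
  refine ⟨(c - d) / (a - b), (d * a - c * b) / (a - b), ?_⟩
  have hab0 : (a : ℂ) - b ≠ 0 := sub_ne_zero.2 (mod_cast hab)
  ext x
  have hac := mem_eigenspace_iff.1 (hc (map_sub_smul_mem_eigenspace A.2 h x))
  have hbd := mem_eigenspace_iff.1 (hd (map_sub_smul_mem_eigenspace A.2 (Set.pair_comm a b ▸ h) x))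
  simp only [ContinuousLinearMap.coe_coe, map_sub, map_smul] at hac hbd
  refine smul_right_injective H hab0 ?_
  simp only [add_apply, smul_apply, one_apply_eq_self, smul_add, smul_smul]
  push_cast
  rw [mul_div_cancel₀ _ hab0, mul_div_cancel₀ _ hab0]
  linear_combination (norm := module) hac - hbd

lemma exists_eq_smul_one_of_spectrum_subset_pair (hab : a ≠ b)
    (h : spectrum ℝ (A : H →L[ℂ] H) ⊆ {a, b}) (hB : B ∈ CSet (CSet {A}))
    (hA : A ∉ CSet (CSet {B})) : ∃ r : ℝ, (B : H →L[ℂ] H) = (r : ℂ) • 1 := by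
  obtain ⟨s, t, hst⟩ := exists_eq_smul_add_smul_one_of_mem_CSet_CSet hab h hB
  rcases eq_or_ne s 0 with rfl | hs
  · exact ⟨t, by rw [hst, Complex.ofReal_zero, zero_smul, zero_add]⟩
  · refine absurd (fun X hX => ?_) hA
    have hXsA : Commute (X : H →L[ℂ] H) ((s : ℂ) • (A : H →L[ℂ] H)) := by
      rw [eq_sub_of_add_eq hst.symm]
      exact (mem_CSet_singleton.1 hX).sub_right ((Commute.one_right _).smul_right _)
    exact ((Commute.smul_right_iff₀ (mod_cast hs)).1 hXsA).symm

lemma QSet_ne_CSet_of_hasEigenvalue_neg (ha : a ≠ 0)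
    (hpos : HasEigenvalue ((A : H →L[ℂ] H) : H →ₗ[ℂ] H) (a : ℂ))
    (hneg : HasEigenvalue ((A : H →L[ℂ] H) : H →ₗ[ℂ] H) ((-a : ℝ) : ℂ)) :
    QSet {A} ≠ CSet {A} := by
  obtain ⟨u, hu, hu0⟩ := hpos.exists_hasEigenvector
  obtain ⟨v, hv, hv0⟩ := hneg.exists_hasEigenvector
  have hne : (a : ℂ) ≠ ((-a : ℝ) : ℂ) := mod_cast self_ne_neg.2 ha
  have horth : inner ℂ u v = 0 :=
    A.2.isSymmetric.orthogonalFamily_eigenspaces.pairwise hne.symm hv u hu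
  let X : selfAdjoint (H →L[ℂ] H) := ⟨rankOne ℂ u v + rankOne ℂ v u, by
    rw [selfAdjoint.mem_iff, ContinuousLinearMap.star_eq_adjoint, map_add, adjoint_rankOne,
      adjoint_rankOne, add_comm]⟩
  have hAX : (A : H →L[ℂ] H) * X = (a : ℂ) • (rankOne ℂ u v - rankOne ℂ v u) := by
    rw [mul_add, mul_rankOne_of_mem_eigenspace hu, mul_rankOne_of_mem_eigenspace hv]
    push_cast
    module
  have hXA : (X : H →L[ℂ] H) * A = -((a : ℂ) • (rankOne ℂ u v - rankOne ℂ v u)) := by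
    rw [add_mul, rankOne_mul_of_mem_eigenspace A.2 hu, rankOne_mul_of_mem_eigenspace A.2 hv]
    push_cast
    module
  intro hQ
  have hX : X ∈ CSet {A} := by
    rw [← hQ]
    rintro _ rfl
    exact Or.inr (by rw [hXA, hAX, neg_add_cancel])
  have hflip : rankOne ℂ u v = rankOne ℂ v u := by
    have h := (mem_CSet_singleton.1 hX).eq
    rw [hXA, hAX, neg_eq_iff_add_eq_zero, ← two_smul ℂ, smul_smul, smul_eq_zero] at h
    exact sub_eq_zero.1 (h.resolve_left (mul_ne_zero two_ne_zero (mod_cast ha)))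
  have huv : inner ℂ v v • u = 0 := by
    simpa only [rankOne_apply, horth, zero_smul] using congr($hflip v)
  exact hu0 ((smul_eq_zero.1 huv).resolve_left (inner_self_ne_zero.2 hv0))

lemma add_ne_zero_of_spectrum_subset_pair (hA : ¬ ∃ r : ℝ, (A : H →L[ℂ] H) = (r : ℂ) • 1)
    (hAq : QSet {A} = CSet {A}) (hab : a ≠ b) (h : spectrum ℝ (A : H →L[ℂ] H) ⊆ {a, b}) :
    a + b ≠ 0 := by
  intro hsum
  obtain rfl : b = -a := eq_neg_of_add_eq_zero_right hsum
  have hpos := hasEigenvalue_of_spectrum_subset_pair A.2 h fun hs => hA ⟨-a, hs⟩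
  have hneg := hasEigenvalue_of_spectrum_subset_pair A.2 (Set.pair_comm a (-a) ▸ h)
    fun hs => hA ⟨a, hs⟩
  exact QSet_ne_CSet_of_hasEigenvalue_neg (self_ne_neg.1 hab) hpos hneg hAq

end Eigenspace

section ThreePoints

open Module.End

variable {A : selfAdjoint (H →L[ℂ] H)}

lemma notMem_CSet_CSet_cfc {k g : ℝ → ℝ} (hk : ContinuousOn k (spectrum ℝ (A : H →L[ℂ] H)))
    (hg : ContinuousOn g (spectrum ℝ (A : H →L[ℂ] H)))
    (hkg : ∀ t ∈ spectrum ℝ (A : H →L[ℂ] H), k t * g t = 0) {p q : ℝ} (hpq : p ≠ q)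
    (hp : p ∈ spectrum ℝ (A : H →L[ℂ] H)) (hq : q ∈ spectrum ℝ (A : H →L[ℂ] H))
    (hgp : g p ≠ 0) (hgq : g q ≠ 0) :
    A ∉ CSet (CSet {⟨cfc k (A : H →L[ℂ] H), cfc_predicate k _⟩}) := by
  intro hA
  obtain ⟨c, hc⟩ := exists_eigenspace_le_of_mem_CSet_CSet hA 0
  have hkg0 : cfc k (A : H →L[ℂ] H) * cfc g (A : H →L[ℂ] H) = 0 := by
    rw [← cfc_mul k g _, ← cfc_const_zero ℝ (A : H →L[ℂ] H)]
    exact cfc_congr hkg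
  have hAg : (A : H →L[ℂ] H) * cfc g (A : H →L[ℂ] H) = c • cfc g (A : H →L[ℂ] H) := by
    ext x
    have hker : cfc g (A : H →L[ℂ] H) x ∈
        eigenspace ((cfc k (A : H →L[ℂ] H) : H →L[ℂ] H) : H →ₗ[ℂ] H) ((0 : ℝ) : ℂ) := by
      rw [Complex.ofReal_zero, eigenspace_zero]
      exact congr($hkg0 x)
    exact mem_eigenspace_iff.1 (hc hker)
  have heq : ∀ t ∈ spectrum ℝ (A : H →L[ℂ] H), t * g t = c * g t := by
    rw [← cfc_const_mul c g _] at hAg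
    nth_rw 1 [← cfc_id' ℝ (A : H →L[ℂ] H)] at hAg
    rw [← cfc_mul (fun t => t) g _] at hAg
    exact eqOn_of_cfc_eq_cfc hAg
  exact hpq ((mul_right_cancel₀ hgp (heq p hp)).trans (mul_right_cancel₀ hgq (heq q hq)).symm)

lemma exists_continuous_nonneg_mul_eq_zero {p q r : ℝ} (hpr : p ≠ r) (hqr : q ≠ r) :
    ∃ k g : ℝ → ℝ, Continuous k ∧ Continuous g ∧ 0 ≤ k ∧ k * g = 0 ∧
      k r ≠ 0 ∧ g p ≠ 0 ∧ g q ≠ 0 := by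
  obtain ⟨ε, hε, hεpq⟩ : ∃ ε, 0 < ε ∧ ε < min |p - r| |q - r| :=
    exists_between (lt_min (abs_pos.2 (sub_ne_zero.2 hpr)) (abs_pos.2 (sub_ne_zero.2 hqr)))
  obtain ⟨hεp, hεq⟩ := lt_min_iff.1 hεpq
  refine ⟨fun t => max (ε - |t - r|) 0, fun t => max (|t - r| - ε) 0, by fun_prop, by fun_prop,
    fun t => le_max_right _ _, funext fun t => ?_, ?_, ?_, ?_⟩
  · rcases le_total ε |t - r| with h | h <;> simp [h]
  · simp [hε.le, hε.ne']
  · simp [hεp]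
  · simp [hεq]

lemma exists_not_smul_one_of_three_mem_spectrum {p q r : ℝ} (hpq : p ≠ q) (hpr : p ≠ r)
    (hqr : q ≠ r) (hp : p ∈ spectrum ℝ (A : H →L[ℂ] H)) (hq : q ∈ spectrum ℝ (A : H →L[ℂ] H))
    (hr : r ∈ spectrum ℝ (A : H →L[ℂ] H)) :
    ∃ B : selfAdjoint (H →L[ℂ] H), QSet {B} = CSet {B} ∧ B ∈ CSet (CSet {A}) ∧
      A ∉ CSet (CSet {B}) ∧ ¬ ∃ c : ℝ, (B : H →L[ℂ] H) = (c : ℂ) • 1 := by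
  obtain ⟨k, g, hk, hg, hk0, hkg, hkr, hgp, hgq⟩ := exists_continuous_nonneg_mul_eq_zero hpr hqr
  have hkp : k p = 0 := (mul_eq_zero.1 (congr_fun hkg p)).resolve_right hgp
  refine ⟨⟨cfc k (A : H →L[ℂ] H), cfc_predicate k _⟩,
    QSet_eq_CSet_of_nonneg (cfc_nonneg fun t _ => hk0 t), fun X hX => ?_,
    notMem_CSet_CSet_cfc hk.continuousOn hg.continuousOn (fun t _ => congr_fun hkg t)
      hpq hp hq hgp hgq, ?_⟩
  · exact (mem_CSet_singleton.1 hX).symm.cfc_real k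
  · rw [exists_eq_smul_one_iff_spectrum_subsingleton (cfc_predicate k _), cfc_map_spectrum k _]
    intro hsub
    exact hkr ((hsub ⟨r, hr, rfl⟩ ⟨p, hp, rfl⟩).trans hkp)

end ThreePoints

theorem stmt9_general
    (A : selfAdjoint (H →L[ℂ] H))
    (hA : ¬ ∃ r : ℝ, (A : H →L[ℂ] H) = (r : ℂ) • 1)
    (hAq : QSet {A} = CSet {A}) :
    (∃ a b : ℂ, a ≠ b ∧ a + b ≠ 0 ∧ spectrum ℂ (A : H →L[ℂ] H) = {a, b}) ↔
      (∀ B : selfAdjoint (H →L[ℂ] H), QSet {B} = CSet {B} →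
        QSet (QSet {B}) ⊂ QSet (QSet {A}) →
        ∃ r : ℝ, (B : H →L[ℂ] H) = (r : ℂ) • 1) := by
  constructor
  · rintro ⟨_, _, hab, -, hspec⟩ B hBq hBA
    obtain ⟨a, b, rfl, rfl, hreal⟩ := (spectrum_complex_eq_pair_iff A.2).1 hspec
    obtain ⟨hB, hAB⟩ := (QSet_QSet_singleton_ssubset_iff hAq hBq).1 hBA
    exact exists_eq_smul_one_of_spectrum_subset_pair (mod_cast hab) hreal.subset hB hAB
  · intro hmin
    obtain ⟨p, hp, q, hq, hpq⟩ : (spectrum ℝ (A : H →L[ℂ] H)).Nontrivial := by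
      rwa [← Set.not_subsingleton_iff, ← exists_eq_smul_one_iff_spectrum_subsingleton A.2]
    have hspec : spectrum ℝ (A : H →L[ℂ] H) = {p, q} := by
      refine Set.Subset.antisymm (fun r hr => ?_) (Set.pair_subset hp hq)
      by_contra! hrpq
      simp only [Set.mem_insert_iff, Set.mem_singleton_iff, not_or] at hrpq
      obtain ⟨B, hBq, hB, hAB, hBns⟩ :=
        exists_not_smul_one_of_three_mem_spectrum hpq (Ne.symm hrpq.1) (Ne.symm hrpq.2) hp hq hr
      exact hBns (hmin B hBq ((QSet_QSet_singleton_ssubset_iff hAq hBq).2 ⟨hB, hAB⟩))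
    have hsum : p + q ≠ 0 := add_ne_zero_of_spectrum_subset_pair hA hAq hpq hspec.subset
    exact ⟨p, q, mod_cast hpq, mod_cast hsum,
      (spectrum_complex_eq_pair_iff A.2).2 ⟨p, q, rfl, rfl, hspec⟩⟩

theorem stmt9
    (hdim : 3 ≤ Module.rank ℂ H)
    (A : selfAdjoint (H →L[ℂ] H))
    (hA : ¬ ∃ r : ℝ, (A : H →L[ℂ] H) = (r : ℂ) • 1)
    (hAq : QSet {A} = CSet {A}) :
    (∃ a b : ℂ, a ≠ b ∧ a + b ≠ 0 ∧ spectrum ℂ (A : H →L[ℂ] H) = {a, b}) ↔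
      (∀ B : selfAdjoint (H →L[ℂ] H), QSet {B} = CSet {B} →
        QSet (QSet {B}) ⊂ QSet (QSet {A}) →
        ∃ r : ℝ, (B : H →L[ℂ] H) = (r : ℂ) • 1) :=
  stmt9_general A hA hAq
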